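/- Let 𝒳 be a finite alphabet, (Θ, w) a probability space, {P_θ} a measurable family of distributions on 𝒳, P_{X^n}(x) = ∫_Θ ∏_{i=1}^n P_θ(x_i) dw(θ) the mixed memoryless source, and P_{X̄^n}(x) = ∏_{i=1}^n P_{X̄}(x_i) a stationary memoryless alternative with P_{X̄}(x) > 0 for all x. For θ ∈ Θ set D_θ = D(P_θ‖P_{X̄}) and V_θ = Σ_x P_θ(x)( log(P_θ(x)/P_{X̄}(x)) − D_θ )², assume V_θ > 0 for all θ, and let Φ_θ(S) = G(S/√V_θ) with G the standard normal CDF. Then for all R, S ∈ ℝ: limsup_{n→∞} Pr{ (1/n) log( P_{X^n}(X^n)/P_{X̄^n}(X^n) ) ≤ R + S/√n } ≥ w({θ : D_θ < R}) + ∫_{{θ : D_θ = R}} Φ_θ(S) dw(θ), where the probability on the left is taken under P_{X^n}. -/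

import Mathlib

open scoped BigOperators
open MeasureTheory

/-- Probability of a set `A` under a distribution `P` on a finite type. -/
noncomputable def prob {α : Type*} [Fintype α] (P : α → ℝ) (A : Set α) : ℝ :=
  ∑ x, A.indicator P x

/-- Kullback–Leibler divergence `D(P‖Q) = ∑_x P(x) log (P(x)/Q(x))` on a finite alphabet. -/
noncomputable def KL {𝒳 : Type*} [Fintype 𝒳] (P Q : 𝒳 → ℝ) : ℝ :=
  ∑ x, P x * Real.log (P x / Q x)

/-- The variance of the divergence density,
`V(P,Q) = ∑_x P(x) (log (P(x)/Q(x)) − D(P‖Q))²`. -/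
noncomputable def Vdiv {𝒳 : Type*} [Fintype 𝒳] (P Q : 𝒳 → ℝ) : ℝ :=
  ∑ x, P x * (Real.log (P x / Q x) - KL P Q) ^ 2

/-- The standard normal cumulative distribution function
`G(x) = (1/√(2π)) ∫_{-∞}^x e^{-u²/2} du`. -/
noncomputable def stdGauss (x : ℝ) : ℝ :=
  ∫ u in Set.Iic x, Real.exp (-u ^ 2 / 2) / Real.sqrt (2 * Real.pi)

/-!
Let `a` be a slack parameter. Since `P_{X^n}` has total mass one, the probability under a component
`P_θ^n` that `P_{X^n}` exceeds `exp b` times the alternative while `P_θ^n` does not even exceed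
`exp (b - a)` times it is at most `exp (-a)`. Averaging over `θ`, the probability of
`P_{X^n} ≤ exp b * P_{X̄^n}` is bounded below by the mean over `θ` of the probabilities of
`P_θ^n ≤ exp (b - a) * P_{X̄^n}`, up to `exp (-a)`. With `b = n R + √n S` and `a = n ^ (1/4)` the
error `exp (-a)` vanishes while the shift `a = o(√n)` leaves the second-order threshold unchanged.
For each `θ` the limit is then `1` or `0` by the law of large numbers if `D_θ ≠ R`, and `Φ_θ(S)` by
the central limit theorem if `D_θ = R`; dominated convergence integrates these limits.
-/

open Filter ProbabilityTheory
open scoped Topology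

section Prob

variable {α Θ : Type*} [Fintype α] [MeasurableSpace Θ] {P Q r : α → ℝ}

lemma prob_nonneg (hP : ∀ x, 0 ≤ P x) (A : Set α) : 0 ≤ prob P A :=
  Finset.sum_nonneg fun x _ => Set.indicator_nonneg (fun x _ => hP x) x

lemma prob_le_one_of_mem_stdSimplex (hP : P ∈ stdSimplex ℝ α) (A : Set α) : prob P A ≤ 1 :=
  hP.2 ▸ Finset.sum_le_sum fun x _ => Set.indicator_le_self' (fun x _ => hP.1 x) x

lemma norm_prob_le_one_of_mem_stdSimplex (hP : P ∈ stdSimplex ℝ α) (A : Set α) :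
    ‖prob P A‖ ≤ 1 :=
  (Real.norm_of_nonneg (prob_nonneg hP.1 A)).trans_le (prob_le_one_of_mem_stdSimplex hP A)

lemma prob_congr_of_ne_zero {A B : Set α} (h : ∀ x, P x ≠ 0 → (x ∈ A ↔ x ∈ B)) :
    prob P A = prob P B := by
  classical
  refine Finset.sum_congr rfl fun x _ => ?_
  by_cases hx : P x = 0
  · simp [Set.indicator_apply, hx]
  · simp [Set.indicator_apply, h x hx]

lemma prob_eq_measureReal [MeasurableSpace α] [MeasurableSingletonClass α] {μ : Measure α}
    [IsFiniteMeasure μ] (hμ : ∀ x, μ.real {x} = P x) (A : Set α) : prob P A = μ.real A := by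
  classical
  rw [← Set.coe_toFinset A, ← sum_measureReal_singleton, prob,
    ← Finset.sum_indicator_subset _ (Finset.subset_univ A.toFinset)]
  simp only [hμ]

lemma prob_le_exp_mul_eq (hP : ∀ x, 0 ≤ P x) (hQ : ∀ x, 0 < Q x) (b : ℝ) :
    prob P {x | P x ≤ Real.exp b * Q x} = prob P {x | Real.log (P x / Q x) ≤ b} := by
  refine prob_congr_of_ne_zero fun x hx => ?_
  have hPx : 0 < P x := (hP x).lt_of_ne' hx
  simp only [Set.mem_ofPred_eq]
  rw [Real.log_le_iff_le_exp (div_pos hPx (hQ x)), div_le_iff₀ (hQ x)]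

lemma prob_one_div_mul_log_div_le_eq (hP : ∀ x, 0 ≤ P x) (hQ : ∀ x, 0 < Q x) {n : ℕ} (hn : 0 < n)
    (R S : ℝ) :
    prob P {x | 1 / (n : ℝ) * Real.log (P x / Q x) ≤ R + S / √n} =
      prob P {x | P x ≤ Real.exp (n * R + √n * S) * Q x} := by
  have hn' : (0 : ℝ) < n := Nat.cast_pos.2 hn
  have hthreshold : n * (R + S / √n) = n * R + √n * S := by
    rw [mul_add, mul_div_left_comm, Real.div_sqrt, mul_comm S]
  simp only [prob_le_exp_mul_eq hP hQ, one_div, inv_mul_le_iff₀ hn', hthreshold]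

/- Where `P x ≤ exp (b - a) * Q x` but `r x > exp b * Q x`, one has `P x ≤ exp (-a) * r x`, and
`r` has total mass one. -/
lemma prob_le_exp_sub_mul_sub_exp_neg_le (hP : ∀ x, 0 ≤ P x) (hr : r ∈ stdSimplex ℝ α)
    (a b : ℝ) :
    prob P {x | P x ≤ Real.exp (b - a) * Q x} - Real.exp (-a) ≤
      prob P {x | r x ≤ Real.exp b * Q x} := by
  classical
  suffices hpointwise : ∀ x, {x | P x ≤ Real.exp (b - a) * Q x}.indicator P x ≤
      {x | r x ≤ Real.exp b * Q x}.indicator P x + Real.exp (-a) * r x by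
    have hsum := Finset.sum_le_sum fun x (_ : x ∈ Finset.univ) => hpointwise x
    rw [Finset.sum_add_distrib, ← Finset.mul_sum, hr.2, mul_one] at hsum
    exact sub_le_iff_le_add.2 hsum
  intro x
  have hrx : 0 ≤ Real.exp (-a) * r x := mul_nonneg (Real.exp_pos _).le (hr.1 x)
  simp only [Set.indicator_apply, Set.mem_ofPred_eq]
  split_ifs with hPQ hrQ hrQ
  · linarith
  · calc P x ≤ Real.exp (b - a) * Q x := hPQ
      _ = Real.exp (-a) * (Real.exp b * Q x) := by
        rw [sub_eq_neg_add, Real.exp_add, mul_assoc]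
      _ ≤ 0 + Real.exp (-a) * r x := by
        rw [zero_add]; gcongr; exact (not_le.1 hrQ).le
  · linarith [hP x]
  · linarith

section Mixture

variable {F : Θ → α → ℝ} {w : Measure Θ}

lemma integrable_of_mem_stdSimplex [IsFiniteMeasure w] (hF : ∀ x, Measurable fun θ => F θ x)
    (hFs : ∀ θ, F θ ∈ stdSimplex ℝ α) (x : α) : Integrable (fun θ => F θ x) w := by
  refine .of_bound (C := 1) (hF x).aestronglyMeasurable (ae_of_all _ fun θ => ?_)
  rw [Real.norm_of_nonneg ((hFs θ).1 x)]
  exact (hFs θ).2 ▸ Finset.single_le_sum (fun y _ => (hFs θ).1 y) (Finset.mem_univ x)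

lemma integral_mem_stdSimplex [IsProbabilityMeasure w] (hF : ∀ x, Measurable fun θ => F θ x)
    (hFs : ∀ θ, F θ ∈ stdSimplex ℝ α) : (fun x => ∫ θ, F θ x ∂w) ∈ stdSimplex ℝ α := by
  refine ⟨fun x => integral_nonneg fun θ => (hFs θ).1 x, ?_⟩
  rw [← integral_finsetSum _ fun x _ => integrable_of_mem_stdSimplex hF hFs x]
  simp [(hFs _).2]

lemma prob_integral (hF : ∀ x, Integrable (fun θ => F θ x) w) (A : Set α) :
    prob (fun x => ∫ θ, F θ x ∂w) A = ∫ θ, prob (F θ) A ∂w := by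
  unfold prob
  rw [integral_finsetSum _ fun x _ => ?_]
  · refine Finset.sum_congr rfl fun x _ => ?_
    by_cases hx : x ∈ A <;> simp [hx]
  · by_cases hx : x ∈ A <;> simp [hx, hF]

lemma measurable_prob (hF : ∀ x, Measurable fun θ => F θ x) {A : Θ → Set α}
    (hA : ∀ x, MeasurableSet {θ | x ∈ A θ}) : Measurable fun θ => prob (F θ) (A θ) := by
  classical
  exact Finset.measurable_fun_sum _ fun x _ => Measurable.ite (hA x) (hF x) measurable_const

lemma integrable_prob [IsFiniteMeasure w] (hF : ∀ x, Measurable fun θ => F θ x)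
    (hFs : ∀ θ, F θ ∈ stdSimplex ℝ α) {A : Θ → Set α} (hA : ∀ x, MeasurableSet {θ | x ∈ A θ}) :
    Integrable (fun θ => prob (F θ) (A θ)) w :=
  .of_bound (measurable_prob hF hA).aestronglyMeasurable 1
    (ae_of_all _ fun θ => norm_prob_le_one_of_mem_stdSimplex (hFs θ) (A θ))

lemma integral_prob_le_exp_sub_mul_sub_exp_neg_le [IsProbabilityMeasure w]
    (hF : ∀ x, Measurable fun θ => F θ x) (hFs : ∀ θ, F θ ∈ stdSimplex ℝ α) (Q : α → ℝ)
    (a b : ℝ) :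
    ∫ θ, prob (F θ) {x | F θ x ≤ Real.exp (b - a) * Q x} ∂w - Real.exp (-a) ≤
      prob (fun x => ∫ θ, F θ x ∂w) {x | ∫ θ, F θ x ∂w ≤ Real.exp b * Q x} := by
  have hint : Integrable (fun θ => prob (F θ) {x | F θ x ≤ Real.exp (b - a) * Q x}) w :=
    integrable_prob hF hFs fun x => measurableSet_le (hF x) measurable_const
  calc ∫ θ, prob (F θ) {x | F θ x ≤ Real.exp (b - a) * Q x} ∂w - Real.exp (-a)
      = ∫ θ, (prob (F θ) {x | F θ x ≤ Real.exp (b - a) * Q x} - Real.exp (-a)) ∂w := by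
        rw [integral_sub hint (integrable_const _)]; simp
    _ ≤ ∫ θ, prob (F θ) {x | ∫ θ, F θ x ∂w ≤ Real.exp b * Q x} ∂w :=
        integral_mono (hint.sub (integrable_const _))
          (integrable_prob hF hFs fun x => MeasurableSet.const _)
          fun θ => prob_le_exp_sub_mul_sub_exp_neg_le (hFs θ).1 (integral_mem_stdSimplex hF hFs) a b
    _ = prob (fun x => ∫ θ, F θ x ∂w) {x | ∫ θ, F θ x ∂w ≤ Real.exp b * Q x} :=
        (prob_integral (integrable_of_mem_stdSimplex hF hFs) _).symm

end Mixture

end Prob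

section ProbSequence

variable {α : ℕ → Type*} [∀ n, Fintype (α n)] {P : ∀ n, α n → ℝ}

lemma isBoundedUnder_le_prob (hP : ∀ n, P n ∈ stdSimplex ℝ (α n)) (A : ∀ n, Set (α n)) :
    IsBoundedUnder (· ≤ ·) atTop fun n => prob (P n) (A n) :=
  isBoundedUnder_of ⟨1, fun n => prob_le_one_of_mem_stdSimplex (hP n) (A n)⟩

lemma isBoundedUnder_ge_prob (hP : ∀ n x, 0 ≤ P n x) (A : ∀ n, Set (α n)) :
    IsBoundedUnder (· ≥ ·) atTop fun n => prob (P n) (A n) :=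
  isBoundedUnder_of ⟨0, fun n => prob_nonneg (hP n) (A n)⟩

end ProbSequence

section StdGauss

lemma stdGauss_eq_measureReal (x : ℝ) : stdGauss x = (gaussianReal 0 1).real (Set.Iic x) := by
  rw [Measure.real, gaussianReal_apply_eq_integral _ one_ne_zero,
    ENNReal.toReal_ofReal (integral_nonneg fun _ => gaussianPDFReal_nonneg _ _ _), stdGauss]
  simp [gaussianPDFReal_def, div_eq_inv_mul]

lemma measurable_stdGauss : Measurable stdGauss := by
  have hmono : Monotone stdGauss := fun x y hxy => by
    simp only [stdGauss_eq_measureReal]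
    exact measureReal_mono (Set.Iic_subset_Iic.2 hxy)
  exact hmono.measurable

lemma stdGauss_nonneg (x : ℝ) : 0 ≤ stdGauss x :=
  stdGauss_eq_measureReal x ▸ measureReal_nonneg

lemma stdGauss_le_one (x : ℝ) : stdGauss x ≤ 1 :=
  stdGauss_eq_measureReal x ▸ measureReal_le_one

end StdGauss

section LimitTheorems

variable {Ω Ω' : Type*} [MeasurableSpace Ω] [MeasurableSpace Ω'] {μ : Measure Ω} {ν : Measure Ω'}
  [IsProbabilityMeasure μ] [IsProbabilityMeasure ν]

lemma tendsto_measureReal_le_of_tendstoInDistribution {Y : ℕ → Ω → ℝ} {Z : Ω' → ℝ}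
    (hY : TendstoInDistribution Y atTop Z (fun _ => μ) ν) {c : ℕ → ℝ} {t : ℝ}
    (hc : Tendsto c atTop (𝓝 t)) (ht : ν {ω | Z ω = t} = 0) :
    Tendsto (fun n => μ.real {ω | Y n ω ≤ c n}) atTop (𝓝 (ν.real {ω | Z ω ≤ t})) := by
  have hshift : TendstoInDistribution (fun n ω => Y n ω - c n) atTop (fun ω => Z ω - t)
      (fun _ => μ) ν :=
    hY.continuous_comp_prodMk_of_tendstoInMeasure_const (Y := fun n _ => c n)
      (g := fun z : ℝ × ℝ => z.1 - z.2) (by fun_prop)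
      (tendstoInMeasure_of_tendsto_ae (fun _ => aestronglyMeasurable_const)
        (ae_of_all _ fun _ => hc))
      (fun _ => aemeasurable_const)
  have hfrontier : ν.map (fun ω => Z ω - t) (frontier (Set.Iic 0)) = 0 := by
    rw [frontier_Iic, Measure.map_apply_of_aemeasurable hshift.aemeasurable_limit
      (measurableSet_singleton 0)]
    simpa [Set.preimage, sub_eq_zero] using ht
  have hlim := (ENNReal.tendsto_toReal (measure_ne_top (ν.map fun ω => Z ω - t) _)).comp
    (ProbabilityMeasure.tendsto_measure_of_null_frontier_of_tendsto' hshift.tendsto hfrontier)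
  simpa only [ProbabilityMeasure.coe_mk, Function.comp_def, Measure.real,
    Measure.map_apply_of_aemeasurable hshift.aemeasurable_limit measurableSet_Iic,
    Measure.map_apply_of_aemeasurable (hshift.forall_aemeasurable _) measurableSet_Iic,
    Set.preimage, Set.mem_Iic, sub_nonpos] using hlim

variable {X : ℕ → Ω → ℝ} {c : ℕ → ℝ} {t : ℝ}

lemma tendsto_measureReal_sum_le_of_mean_ne (hX : Integrable (X 0) μ) (hindep : iIndepFun X μ)
    (hident : ∀ i, IdentDistrib (X i) (X 0) μ μ)
    (hc : Tendsto (fun n : ℕ => c n / n) atTop (𝓝 t)) (ht : μ[X 0] ≠ t) :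
    Tendsto (fun n => μ.real {ω | ∑ i ∈ Finset.range n, X i ω ≤ c n}) atTop
      (𝓝 (if μ[X 0] < t then 1 else 0)) := by
  have hlln : TendstoInDistribution (fun (n : ℕ) ω => (∑ i ∈ Finset.range n, X i ω) / n) atTop
      (fun _ => μ[X 0]) (fun _ => μ) μ :=
    tendstoInDistribution_of_ae_tendsto
      (fun n => (Finset.aemeasurable_fun_sum _ fun i _ => (hident i).aemeasurable_fst).div_const _)
      aemeasurable_const
      (strong_law_ae_real X hX (fun i j hij => hindep.indepFun hij) hident)
  have hlim := tendsto_measureReal_le_of_tendstoInDistribution hlln hc (by simp [ht])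
  have hvalue : μ.real {_ω | μ[X 0] ≤ t} = if μ[X 0] < t then 1 else 0 := by
    simp only [ht.le_iff_lt]
    split_ifs with h <;> simp [h]
  rw [← hvalue]
  refine hlim.congr' ?_
  filter_upwards [eventually_gt_atTop 0] with n hn
  simp only [div_le_div_iff_of_pos_right (Nat.cast_pos.2 hn : (0 : ℝ) < n)]

lemma tendsto_measureReal_sum_le_of_variance_pos (hX : 0 < Var[X 0; μ]) (hindep : iIndepFun X μ)
    (hident : ∀ i, IdentDistrib (X i) (X 0) μ μ)
    (hc : Tendsto (fun n : ℕ => (c n - n * μ[X 0]) / √n) atTop (𝓝 t)) :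
    Tendsto (fun n => μ.real {ω | ∑ i ∈ Finset.range n, X i ω ≤ c n}) atTop
      (𝓝 (stdGauss (t / √Var[X 0; μ]))) := by
  set σ := √Var[X 0; μ] with hσ
  have hσ_pos : 0 < σ := Real.sqrt_pos.2 hX
  have hlaw : HasLaw (fun z : ℝ => σ * z) (gaussianReal 0 Var[X 0; μ].toNNReal)
      (gaussianReal 0 1) := by
    have hvar : NNReal.mk (σ ^ 2) (sq_nonneg σ) = Var[X 0; μ].toNNReal := by
      ext; simp [hσ, Real.sq_sqrt hX.le, hX.le]
    simpa [hvar] using gaussianReal_const_mul (HasLaw.id (μ := gaussianReal 0 1)) σ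
  have hclt := tendstoInDistribution_inv_sqrt_mul_sum_sub hlaw
    (memLp_two_of_variance_ne_zero (hident 0).aemeasurable_fst.aestronglyMeasurable hX.ne')
    hindep hident
  have := nullSingletonClass_gaussianReal (μ := 0) (v := 1) one_ne_zero
  have hlim := tendsto_measureReal_le_of_tendstoInDistribution hclt hc (by
    simp only [mul_comm σ, ← eq_div_iff hσ_pos.ne']
    exact measure_singleton _)
  have hvalue : (gaussianReal 0 1).real {z | σ * z ≤ t} = stdGauss (t / σ) := by
    rw [stdGauss_eq_measureReal]
    simp only [mul_comm σ, ← le_div_iff₀ hσ_pos]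
    rfl
  rw [← hvalue]
  refine hlim.congr' ?_
  filter_upwards [eventually_gt_atTop 0] with n hn
  have hn' : 0 < √(n : ℝ) := Real.sqrt_pos.2 (Nat.cast_pos.2 hn)
  simp only [inv_mul_eq_div, div_le_div_iff_of_pos_right hn', sub_le_sub_iff_right]

lemma identDistrib_comp_eval_infinitePi {ι E F : Type*} [MeasurableSpace E] [MeasurableSpace F]
    (ρ : Measure E) [IsProbabilityMeasure ρ] {f : E → F} (hf : Measurable f) (i : ι) :
    IdentDistrib (fun ω : ι → E => f (ω i)) f (Measure.infinitePi fun _ => ρ) ρ where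
  aemeasurable_fst := (hf.comp (measurable_pi_apply i)).aemeasurable
  aemeasurable_snd := hf.aemeasurable
  map_eq := by
    have heval := (measurePreserving_eval_infinitePi (fun _ : ι => ρ) i).map_eq
    conv_rhs => rw [← heval, Measure.map_map hf (measurable_pi_apply i)]
    rfl

end LimitTheorems

section IidSource

variable {𝒳 : Type*} {p q : 𝒳 → ℝ}

/-- The stationary memoryless source `P_{X^n}(x) = ∏ i, p (x i)` with marginal `p`. -/
def iidSource (p : 𝒳 → ℝ) (n : ℕ) (x : Fin n → 𝒳) : ℝ := ∏ i, p (x i)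

lemma iidSource_nonneg (hp : ∀ x, 0 ≤ p x) {n : ℕ} (x : Fin n → 𝒳) : 0 ≤ iidSource p n x :=
  Finset.prod_nonneg fun i _ => hp (x i)

lemma iidSource_pos (hp : ∀ x, 0 < p x) {n : ℕ} (x : Fin n → 𝒳) : 0 < iidSource p n x :=
  Finset.prod_pos fun i _ => hp (x i)

lemma log_iidSource_div {n : ℕ} {x : Fin n → 𝒳} (hpx : iidSource p n x ≠ 0)
    (hq : ∀ x, q x ≠ 0) :
    Real.log (iidSource p n x / iidSource q n x) = ∑ i, Real.log (p (x i) / q (x i)) := by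
  rw [iidSource, iidSource, ← Finset.prod_div_distrib, Real.log_prod fun i _ =>
    div_ne_zero (Finset.prod_ne_zero_iff.1 hpx i (Finset.mem_univ i)) (hq (x i))]

variable [Fintype 𝒳]

lemma iidSource_mem_stdSimplex (hp : p ∈ stdSimplex ℝ 𝒳) (n : ℕ) :
    iidSource p n ∈ stdSimplex ℝ (Fin n → 𝒳) :=
  ⟨iidSource_nonneg hp.1, by simp only [iidSource, ← Fintype.sum_pow, hp.2, one_pow]⟩

section Representation

variable [MeasurableSpace 𝒳] [MeasurableSingletonClass 𝒳] {μ : Measure 𝒳}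

lemma exists_isProbabilityMeasure_real_singleton_eq (hp : p ∈ stdSimplex ℝ 𝒳) :
    ∃ μ : Measure 𝒳, IsProbabilityMeasure μ ∧ ∀ x, μ.real {x} = p x := by
  let pmf : PMF 𝒳 := PMF.ofFintype (fun x => ENNReal.ofReal (p x)) (by
    rw [← ENNReal.ofReal_sum_of_nonneg (fun x _ => hp.1 x), hp.2, ENNReal.ofReal_one])
  exact ⟨pmf.toMeasure, inferInstance, fun x => by
    rw [Measure.real, pmf.toMeasure_apply_singleton x (measurableSet_singleton x),
      PMF.ofFintype_apply, ENNReal.toReal_ofReal (hp.1 x)]⟩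

lemma integral_eq_sum_of_real_singleton_eq [IsFiniteMeasure μ]
    (hμ : ∀ x, μ.real {x} = p x) (f : 𝒳 → ℝ) : μ[f] = ∑ x, p x * f x := by
  simp [integral_fintype Integrable.of_finite, hμ]

variable [IsProbabilityMeasure μ]

lemma prob_iidSource_eq_measureReal_infinitePi (hμ : ∀ x, μ.real {x} = p x) (n : ℕ)
    (A : Set (Fin n → 𝒳)) :
    prob (iidSource p n) A =
      (Measure.infinitePi fun _ : ℕ => μ).real {ω | (fun i : Fin n => ω i) ∈ A} := by
  have hindep : iIndepFun (fun (i : Fin n) (ω : ℕ → 𝒳) => ω i)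
      (Measure.infinitePi fun _ : ℕ => μ) :=
    (iIndepFun_infinitePi (P := fun _ : ℕ => μ) (X := fun _ => id)
      fun _ => measurable_id).precomp Fin.val_injective
  have hmap : (Measure.infinitePi fun _ : ℕ => μ).map (fun ω (i : Fin n) => ω i) =
      Measure.pi fun _ : Fin n => μ := by
    rw [hindep.map_fun_eq_pi_map fun i => (measurable_pi_apply _).aemeasurable]
    simp only [Measure.infinitePi_map_eval]
  have hpi : ∀ x, (Measure.pi fun _ : Fin n => μ).real {x} = iidSource p n x := fun x => by
    simp [Measure.real, Measure.pi_singleton, ENNReal.toReal_prod, iidSource, ← hμ]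
  rw [prob_eq_measureReal hpi, ← hmap,
    map_measureReal_apply (by fun_prop) A.toFinite.measurableSet]
  rfl

lemma prob_iidSource_sum_le (hμ : ∀ x, μ.real {x} = p x) (f : 𝒳 → ℝ) (n : ℕ) (c : ℝ) :
    prob (iidSource p n) {x | ∑ i, f (x i) ≤ c} =
      (Measure.infinitePi fun _ : ℕ => μ).real {ω | ∑ i ∈ Finset.range n, f (ω i) ≤ c} := by
  simp only [prob_iidSource_eq_measureReal_infinitePi hμ, Set.mem_ofPred_eq, Finset.sum_range]

end Representation

variable {f : 𝒳 → ℝ} {m V R S : ℝ} {c : ℕ → ℝ}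

lemma tendsto_prob_iidSource_sum_le_of_mean_ne (hp : p ∈ stdSimplex ℝ 𝒳)
    (hm : ∑ x, p x * f x = m) (hc : Tendsto (fun n : ℕ => c n / n) atTop (𝓝 R)) (hmR : m ≠ R) :
    Tendsto (fun n => prob (iidSource p n) {x | ∑ i, f (x i) ≤ c n}) atTop
      (𝓝 (if m < R then 1 else 0)) := by
  let _ : MeasurableSpace 𝒳 := ⊤
  obtain ⟨μ, _, hμ⟩ := exists_isProbabilityMeasure_real_singleton_eq hp
  have hident := identDistrib_comp_eval_infinitePi (ι := ℕ) μ (measurable_of_finite f)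
  have hindep : iIndepFun (fun (i : ℕ) (ω : ℕ → 𝒳) => f (ω i)) (Measure.infinitePi fun _ => μ) :=
    iIndepFun_infinitePi (P := fun _ => μ) (X := fun _ => f) fun _ => measurable_of_finite f
  have hint : Integrable (fun ω : ℕ → 𝒳 => f (ω 0)) (Measure.infinitePi fun _ => μ) :=
    (hident 0).integrable_iff.2 .of_finite
  have hmean : ∫ ω : ℕ → 𝒳, f (ω 0) ∂(Measure.infinitePi fun _ => μ) = m := by
    rw [(hident 0).integral_eq, integral_eq_sum_of_real_singleton_eq hμ, hm]
  have hlim := tendsto_measureReal_sum_le_of_mean_ne hint hindep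
    (fun i => (hident i).trans (hident 0).symm) hc (hmean.trans_ne hmR)
  simpa only [hmean, prob_iidSource_sum_le hμ] using hlim

lemma tendsto_prob_iidSource_sum_le_of_variance_pos (hp : p ∈ stdSimplex ℝ 𝒳)
    (hm : ∑ x, p x * f x = m) (hV : ∑ x, p x * (f x - m) ^ 2 = V) (hV_pos : 0 < V)
    (hc : Tendsto (fun n : ℕ => (c n - n * m) / √n) atTop (𝓝 S)) :
    Tendsto (fun n => prob (iidSource p n) {x | ∑ i, f (x i) ≤ c n}) atTop
      (𝓝 (stdGauss (S / √V))) := by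
  let _ : MeasurableSpace 𝒳 := ⊤
  obtain ⟨μ, _, hμ⟩ := exists_isProbabilityMeasure_real_singleton_eq hp
  have hident := identDistrib_comp_eval_infinitePi (ι := ℕ) μ (measurable_of_finite f)
  have hindep : iIndepFun (fun (i : ℕ) (ω : ℕ → 𝒳) => f (ω i)) (Measure.infinitePi fun _ => μ) :=
    iIndepFun_infinitePi (P := fun _ => μ) (X := fun _ => f) fun _ => measurable_of_finite f
  have hmean : ∫ ω : ℕ → 𝒳, f (ω 0) ∂(Measure.infinitePi fun _ => μ) = m := by
    rw [(hident 0).integral_eq, integral_eq_sum_of_real_singleton_eq hμ, hm]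
  have hvar : Var[fun ω : ℕ → 𝒳 => f (ω 0); Measure.infinitePi fun _ => μ] = V := by
    rw [(hident 0).variance_eq, variance_eq_integral (measurable_of_finite f).aemeasurable,
      integral_eq_sum_of_real_singleton_eq hμ, integral_eq_sum_of_real_singleton_eq hμ, hm, hV]
  have hlim := tendsto_measureReal_sum_le_of_variance_pos (hvar ▸ hV_pos) hindep
    (fun i => (hident i).trans (hident 0).symm) (by simpa only [hmean] using hc)
  simpa only [hvar, prob_iidSource_sum_le hμ] using hlim

end IidSource

section SecondOrderLimit

variable {𝒳 Θ : Type*} [Fintype 𝒳] {p q : 𝒳 → ℝ} {R S : ℝ}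

/-- The limit, under `p`, of the probability that the sum of `n` independent copies of the
divergence density `log (p / q)` is at most `n * R + √n * S`. In the boundary case `KL p q = R` the
value is meaningful only for `0 < Vdiv p q`, because of the division by `√(Vdiv p q)`. -/
noncomputable def secondOrderLimit (p q : 𝒳 → ℝ) (R S : ℝ) : ℝ :=
  if KL p q < R then 1 else if KL p q = R then stdGauss (S / √(Vdiv p q)) else 0

lemma tendsto_div_natCast_of_tendsto_sub_div_sqrt {c : ℕ → ℝ}
    (hc : Tendsto (fun n : ℕ => (c n - n * R) / √n) atTop (𝓝 S)) :
    Tendsto (fun n : ℕ => c n / n) atTop (𝓝 R) := by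
  have hsqrt : Tendsto (fun n : ℕ => √(n : ℝ)) atTop atTop :=
    Real.tendsto_sqrt_atTop.comp tendsto_natCast_atTop_atTop
  have hlim := (hc.div_atTop hsqrt).const_add R
  rw [add_zero] at hlim
  refine hlim.congr' ?_
  filter_upwards [eventually_gt_atTop 0] with n hn
  have hn' : (n : ℝ) ≠ 0 := Nat.cast_ne_zero.2 hn.ne'
  rw [div_div, Real.mul_self_sqrt n.cast_nonneg, sub_div, mul_div_cancel_left₀ _ hn',
    add_sub_cancel]

lemma prob_iidSource_le_exp_mul_eq (hp : ∀ x, 0 ≤ p x) (hq : ∀ x, 0 < q x) (n : ℕ) (b : ℝ) :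
    prob (iidSource p n) {x | iidSource p n x ≤ Real.exp b * iidSource q n x} =
      prob (iidSource p n) {x | ∑ i, Real.log (p (x i) / q (x i)) ≤ b} := by
  rw [prob_le_exp_mul_eq (iidSource_nonneg hp) (iidSource_pos hq)]
  refine prob_congr_of_ne_zero fun x hx => ?_
  simp only [Set.mem_ofPred_eq, log_iidSource_div hx fun x => (hq x).ne']

lemma tendsto_prob_iidSource_le_exp_mul (hp : p ∈ stdSimplex ℝ 𝒳) (hq : ∀ x, 0 < q x)
    (hV : KL p q = R → 0 < Vdiv p q) {c : ℕ → ℝ}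
    (hc : Tendsto (fun n : ℕ => (c n - n * R) / √n) atTop (𝓝 S)) :
    Tendsto (fun n => prob (iidSource p n)
        {x | iidSource p n x ≤ Real.exp (c n) * iidSource q n x}) atTop
      (𝓝 (secondOrderLimit p q R S)) := by
  simp only [prob_iidSource_le_exp_mul_eq hp.1 hq]
  rcases eq_or_ne (KL p q) R with rfl | hR
  · rw [secondOrderLimit, if_neg (lt_irrefl _), if_pos rfl]
    exact tendsto_prob_iidSource_sum_le_of_variance_pos (f := fun x => Real.log (p x / q x)) hp
      (m := KL p q) (V := Vdiv p q) rfl rfl (hV rfl) hc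
  · rw [secondOrderLimit, if_neg hR]
    exact tendsto_prob_iidSource_sum_le_of_mean_ne (f := fun x => Real.log (p x / q x)) hp
      (m := KL p q) rfl (tendsto_div_natCast_of_tendsto_sub_div_sqrt hc) hR

variable [MeasurableSpace Θ] {w : Measure Θ} {P : Θ → 𝒳 → ℝ}

lemma measurable_KL (hP : ∀ x, Measurable fun θ => P θ x) (q : 𝒳 → ℝ) :
    Measurable fun θ => KL (P θ) q := by
  unfold KL
  fun_prop

lemma measurable_Vdiv (hP : ∀ x, Measurable fun θ => P θ x) (q : 𝒳 → ℝ) :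
    Measurable fun θ => Vdiv (P θ) q := by
  have hKL := measurable_KL hP q
  unfold Vdiv
  fun_prop

lemma integral_secondOrderLimit [IsFiniteMeasure w] (hP : ∀ x, Measurable fun θ => P θ x)
    (q : 𝒳 → ℝ) (R S : ℝ) :
    ∫ θ, secondOrderLimit (P θ) q R S ∂w = w.real {θ | KL (P θ) q < R} +
      ∫ θ in {θ | KL (P θ) q = R}, stdGauss (S / √(Vdiv (P θ) q)) ∂w := by
  have hlt : MeasurableSet {θ | KL (P θ) q < R} :=
    measurableSet_lt (measurable_KL hP q) measurable_const
  have heq : MeasurableSet {θ | KL (P θ) q = R} :=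
    measurableSet_eq_fun (measurable_KL hP q) measurable_const
  have hgauss : Integrable (fun θ => stdGauss (S / √(Vdiv (P θ) q))) w := by
    refine .of_bound (C := 1) (measurable_stdGauss.comp
      ((measurable_Vdiv hP q).sqrt.const_div S)).aestronglyMeasurable (ae_of_all _ fun θ => ?_)
    rw [Real.norm_of_nonneg (stdGauss_nonneg _)]
    exact stdGauss_le_one _
  rw [← integral_indicator_one hlt, ← integral_indicator heq,
    ← integral_add (f := Set.indicator _ 1) ((integrable_const 1).indicator hlt)
      (hgauss.indicator heq)]
  refine integral_congr_ae (ae_of_all _ fun θ => ?_)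
  rcases lt_trichotomy (KL (P θ) q) R with h | h | h
  · simp [secondOrderLimit, h, h.ne]
  · simp [secondOrderLimit, h]
  · simp [secondOrderLimit, h.not_gt, h.ne']

end SecondOrderLimit

section MixedSource

variable {𝒳 Θ : Type*} [MeasurableSpace Θ] {w : Measure Θ} {P : Θ → 𝒳 → ℝ} {q : 𝒳 → ℝ} {R S : ℝ}

/-- The mixed memoryless source `P_{X^n}(x) = ∫ θ, ∏ i, P θ (x i) ∂w` with mixing measure `w` and
components `P θ`. -/
noncomputable def mixedSource (w : Measure Θ) (P : Θ → 𝒳 → ℝ) (n : ℕ) (x : Fin n → 𝒳) : ℝ :=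
  ∫ θ, iidSource (P θ) n x ∂w

lemma measurable_iidSource (hP : ∀ x, Measurable fun θ => P θ x) {n : ℕ} (x : Fin n → 𝒳) :
    Measurable fun θ => iidSource (P θ) n x :=
  Finset.measurable_fun_prod _ fun i _ => hP (x i)

variable [Fintype 𝒳]

lemma mixedSource_mem_stdSimplex [IsProbabilityMeasure w] (hP : ∀ x, Measurable fun θ => P θ x)
    (hPs : ∀ θ, P θ ∈ stdSimplex ℝ 𝒳) (n : ℕ) :
    mixedSource w P n ∈ stdSimplex ℝ (Fin n → 𝒳) :=
  integral_mem_stdSimplex (measurable_iidSource hP) fun θ => iidSource_mem_stdSimplex (hPs θ) n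

lemma tendsto_integral_prob_iidSource_le_exp_mul [IsFiniteMeasure w]
    (hP : ∀ x, Measurable fun θ => P θ x) (hPs : ∀ θ, P θ ∈ stdSimplex ℝ 𝒳)
    (hq : ∀ x, 0 < q x) (hV : ∀ θ, KL (P θ) q = R → 0 < Vdiv (P θ) q)
    {c : ℕ → ℝ} (hc : Tendsto (fun n : ℕ => (c n - n * R) / √n) atTop (𝓝 S)) :
    Tendsto (fun n => ∫ θ, prob (iidSource (P θ) n)
        {x | iidSource (P θ) n x ≤ Real.exp (c n) * iidSource q n x} ∂w) atTop
      (𝓝 (∫ θ, secondOrderLimit (P θ) q R S ∂w)) := by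
  refine tendsto_integral_of_dominated_convergence (fun _ => 1) (fun n => ?_) (integrable_const 1)
    (fun n => ae_of_all _ fun θ =>
      norm_prob_le_one_of_mem_stdSimplex (iidSource_mem_stdSimplex (hPs θ) n) _)
    (ae_of_all _ fun θ => tendsto_prob_iidSource_le_exp_mul (hPs θ) hq (hV θ) hc)
  exact (measurable_prob (measurable_iidSource hP) fun x =>
    measurableSet_le (measurable_iidSource hP x) measurable_const).aestronglyMeasurable

end MixedSource

lemma exists_tendsto_atTop_div_sqrt_tendsto_zero :
    ∃ a : ℕ → ℝ, Tendsto a atTop atTop ∧ Tendsto (fun n : ℕ => a n / √n) atTop (𝓝 0) := by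
  have hsqrt : Tendsto (fun n : ℕ => √(n : ℝ)) atTop atTop :=
    Real.tendsto_sqrt_atTop.comp tendsto_natCast_atTop_atTop
  have hroot : Tendsto (fun n : ℕ => √√(n : ℝ)) atTop atTop := Real.tendsto_sqrt_atTop.comp hsqrt
  refine ⟨fun n => √√(n : ℝ), hroot, ?_⟩
  simpa only [Real.sqrt_div_self'] using tendsto_const_nhds.div_atTop hroot

theorem stmt_11_general {𝒳 Θ : Type*} [Fintype 𝒳] [MeasurableSpace Θ]
    (w : Measure Θ) [IsProbabilityMeasure w] (P : Θ → 𝒳 → ℝ)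
    (hmeas : ∀ x, Measurable fun θ => P θ x) (hdist : ∀ θ, P θ ∈ stdSimplex ℝ 𝒳)
    (Q : 𝒳 → ℝ) (hQ : ∀ x, 0 < Q x) (R S : ℝ)
    (hV : ∀ θ, KL (P θ) Q = R → 0 < Vdiv (P θ) Q) :
    w.real {θ | KL (P θ) Q < R} +
        ∫ θ in {θ | KL (P θ) Q = R}, stdGauss (S / √(Vdiv (P θ) Q)) ∂w ≤
      liminf (fun n : ℕ => prob (mixedSource w P n)
        {x | 1 / (n : ℝ) * Real.log (mixedSource w P n x / iidSource Q n x) ≤ R + S / √n})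
        atTop := by
  obtain ⟨a, ha_top, ha_sqrt⟩ := exists_tendsto_atTop_div_sqrt_tendsto_zero
  have hc : Tendsto (fun n : ℕ => (n * R + √n * S - a n - n * R) / √n) atTop (𝓝 S) := by
    have hlim := ha_sqrt.const_sub S
    rw [sub_zero] at hlim
    refine hlim.congr' ?_
    filter_upwards [eventually_gt_atTop 0] with n hn
    have : √(n : ℝ) ≠ 0 := (Real.sqrt_pos.2 (Nat.cast_pos.2 hn)).ne'
    field_simp
    ring
  have hlower := (tendsto_integral_prob_iidSource_le_exp_mul (w := w) hmeas hdist hQ hV hc).sub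
    (Real.tendsto_exp_neg_atTop_nhds_zero.comp ha_top)
  rw [sub_zero, integral_secondOrderLimit hmeas] at hlower
  rw [← hlower.liminf_eq]
  have hmixed := mixedSource_mem_stdSimplex (w := w) hmeas hdist
  refine liminf_le_liminf ?_ hlower.isBoundedUnder_ge
    (isBoundedUnder_le_prob hmixed _).isCoboundedUnder_ge
  filter_upwards [eventually_gt_atTop 0] with n hn
  rw [prob_one_div_mul_log_div_le_eq (hmixed n).1 (iidSource_pos hQ) hn]
  exact integral_prob_le_exp_sub_mul_sub_exp_neg_le (measurable_iidSource hmeas)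
    (fun θ => iidSource_mem_stdSimplex (hdist θ) n) _ _ _

/-- Inequality (16): the limsup of the mixed-source probability of the event
`(1/n) log (P_{X^n}(X^n)/P_{X̄^n}(X^n)) ≤ R + S/√n` is at least
`w({θ : D_θ < R}) + ∫_{{θ : D_θ = R}} Φ_θ(S) dw(θ)`. -/
theorem stmt_11 {𝒳 Θ : Type*} [Fintype 𝒳] [MeasurableSpace Θ]
    (w : Measure Θ) [IsProbabilityMeasure w]
    (P : Θ → 𝒳 → ℝ)
    (hmeas : ∀ x : 𝒳, Measurable fun θ => P θ x)
    (hdist : ∀ θ, (∀ x, 0 ≤ P θ x) ∧ (∑ x, P θ x) = 1)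
    (Q : 𝒳 → ℝ) (hQ0 : ∀ x, 0 < Q x) (hQ1 : ∑ x, Q x = 1)
    (hV : ∀ θ, 0 < Vdiv (P θ) Q)
    (R S : ℝ) :
    Filter.limsup (fun n : ℕ =>
      prob (fun x : Fin n → 𝒳 => ∫ θ, (∏ i, P θ (x i)) ∂w)
        {x | (1 / (n : ℝ)) * Real.log
          ((∫ θ, (∏ i, P θ (x i)) ∂w) / ∏ i, Q (x i)) ≤ R + S / Real.sqrt (n : ℝ)})
      Filter.atTop ≥
    (w {θ | KL (P θ) Q < R}).toReal +
      ∫ θ in {θ | KL (P θ) Q = R}, stdGauss (S / Real.sqrt (Vdiv (P θ) Q)) ∂w := by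
  have hmixed := mixedSource_mem_stdSimplex (w := w) hmeas hdist
  exact (stmt_11_general w P hmeas hdist Q hQ0 R S fun θ _ => hV θ).trans
    (liminf_le_limsup (isBoundedUnder_le_prob hmixed _)
      (isBoundedUnder_ge_prob (fun n => (hmixed n).1) _))
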